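/- Let 1 ≤ p ≤ q ≤ ∞. Then there exists a constant C > 0 such that ‖e^{tΔ} f‖_{L^∞_H L^q_{x₃}(𝕋³)} ≤ C (1 + t^{−1/2})^{1/p − 1/q} ‖f‖_{L^∞_H L^p_{x₃}(𝕋³)} for all t > 0 and all f ∈ L^∞_H L^p_{x₃}(𝕋³), where e^{tΔ} f = K_t ∗ f is convolution on 𝕋³ with the three-dimensional heat kernel K_t. -/

import Mathlib

/-!
The three-dimensional kernel is dominated by a product of one-dimensional periodized Gaussians, each
of which has unit mass over a period (`lintegral_heatKernel1`) and is at most `M = C₀ (1 + t^{-1/2})`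
(`heatKernel1_le`). Write `N` for the `L^∞_H L^p` norm of `f`.

For `p < ∞`, Jensen's inequality for the probability density given by the kernel
(`heatAverage_rpow_le`) bounds `|e^{tΔ} f|^p` by the heat average `A` of `|f|^p`. Bounding the vertical
kernel by `M` yields `A ≤ M N^p`, while integrating it in `x₃` yields `∫ A dx₃ ≤ N^p`; the horizontal
kernels only average and cost nothing. The first bound is the case `q = ∞`, and for `q < ∞`
interpolating `|e^{tΔ} f|^q = |e^{tΔ} f|^p |e^{tΔ} f|^{q-p}` gives the factor `M^{1/p - 1/q}`
(`lintegral_interpolation`). For `p = q = ∞` the unit mass of the kernel suffices.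
-/

open MeasureTheory
open scoped ENNReal

/-- The anisotropic norm `‖f‖_{L^∞_H L^q_{x₃}(𝕋³)}`: the supremum over the
horizontal variables of the `L^q` norm in the vertical variable over one period. -/
noncomputable def anisoNorm {E : Type*} [NormedAddCommGroup E] (q : ℝ≥0∞)
    (f : ℝ × ℝ × ℝ → E) : ℝ≥0∞ :=
  ⨆ x1 : ℝ, ⨆ x2 : ℝ,
    eLpNorm (fun x3 => f (x1, x2, x3)) q
      (volume.restrict (Set.Ioc 0 (2 * Real.pi)))

/-- `2π`-periodicity in each of the three variables. -/
def Periodic3 {E : Type*} (f : ℝ × ℝ × ℝ → E) : Prop :=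
  (∀ x : ℝ × ℝ × ℝ, f (x.1 + 2 * Real.pi, x.2.1, x.2.2) = f x) ∧
  (∀ x : ℝ × ℝ × ℝ, f (x.1, x.2.1 + 2 * Real.pi, x.2.2) = f x) ∧
  (∀ x : ℝ × ℝ × ℝ, f (x.1, x.2.1, x.2.2 + 2 * Real.pi) = f x)

/-- The three-dimensional heat kernel on `𝕋³`, as a `2π`-periodic function on `ℝ³`. -/
noncomputable def heatKernel3 (t : ℝ) (x : ℝ × ℝ × ℝ) : ℝ :=
  ∑' k : ℤ × ℤ × ℤ,
    (4 * Real.pi * t) ^ (-(3 : ℝ) / 2) *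
      Real.exp (-((x.1 - 2 * Real.pi * k.1) ^ 2 + (x.2.1 - 2 * Real.pi * k.2.1) ^ 2 +
        (x.2.2 - 2 * Real.pi * k.2.2) ^ 2) / (4 * t))

/-- A fundamental domain for `𝕋³` inside `ℝ³`. -/
noncomputable def box3 : Set (ℝ × ℝ × ℝ) :=
  Set.Ioc 0 (2 * Real.pi) ×ˢ (Set.Ioc 0 (2 * Real.pi) ×ˢ Set.Ioc 0 (2 * Real.pi))

/-- The heat semigroup `e^{tΔ} f = K_t ∗ f` on `𝕋³` (convolution on the torus). -/
noncomputable def heatSemigroup3 (t : ℝ) (f : ℝ × ℝ × ℝ → ℂ) (x : ℝ × ℝ × ℝ) : ℂ :=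
  ∫ y in box3, ((heatKernel3 t (x - y) : ℝ) : ℂ) * f y

open Set Real

/-! ### The one-dimensional heat kernel -/

/-- The one-dimensional heat kernel on `ℝ/2πℤ` as a `2π`-periodic function on `ℝ`: the
periodization of the centred Gaussian density of variance `2t`. It takes values in `ℝ≥0∞`, so that
no summability has to be tracked. -/
noncomputable def heatKernel1 (t x : ℝ) : ℝ≥0∞ :=
  ∑' n : ℤ, ProbabilityTheory.gaussianPDF 0 (2 * t).toNNReal (x - 2 * π * n)

lemma measurable_heatKernel1 (t : ℝ) : Measurable (heatKernel1 t) :=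
  Measurable.tsum fun _ =>
    (ProbabilityTheory.measurable_gaussianPDF _ _).comp (measurable_id.sub_const _)

lemma gaussianPDF_two_mul {t : ℝ} (ht : 0 < t) (x : ℝ) :
    ProbabilityTheory.gaussianPDF 0 (2 * t).toNNReal x =
      ENNReal.ofReal ((√(4 * π * t))⁻¹ * Real.exp (-x ^ 2 / (4 * t))) := by
  rw [ProbabilityTheory.gaussianPDF, ProbabilityTheory.gaussianPDFReal,
    Real.coe_toNNReal _ (by positivity), sub_zero]
  rw [show 2 * π * (2 * t) = 4 * π * t by ring, show 2 * (2 * t) = 4 * t by ring]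

lemma heatKernel1_neg {t : ℝ} (ht : 0 < t) (x : ℝ) : heatKernel1 t (-x) = heatKernel1 t x := by
  unfold heatKernel1
  rw [← (Equiv.neg ℤ).tsum_eq]
  refine tsum_congr fun n => ?_
  rw [gaussianPDF_two_mul ht, gaussianPDF_two_mul ht]
  have : (-x - 2 * π * ((Equiv.neg ℤ n : ℤ) : ℝ)) ^ 2 = (x - 2 * π * n) ^ 2 := by
    simp only [Equiv.neg_apply, Int.cast_neg]; ring
  rw [this]

/-- Unfolding: the translates of one period tile the line. -/
lemma tsum_setLIntegral_periods {h : ℝ → ℝ≥0∞} :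
    ∑' n : ℤ, ∫⁻ y in Ioc 0 (2 * π), h (y + 2 * π * n) = ∫⁻ y, h y := by
  have hu := iUnion_Ioc_add_zsmul (p := 2 * π) (by positivity) 0
  rw [← setLIntegral_univ h, ← hu, lintegral_iUnion (fun _ => measurableSet_Ioc)
    (Set.pairwise_disjoint_Ioc_add_zsmul _ _)]
  refine tsum_congr fun n => ?_
  rw [← (measurePreserving_add_right volume (2 * π * (n : ℝ))).setLIntegral_comp_preimage_emb
    (MeasurableEquiv.addRight (2 * π * (n : ℝ))).measurableEmbedding h
    (Ioc (0 + n • (2 * π)) (0 + (n + 1) • (2 * π)))]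
  congr 3
  ext y
  simp only [mem_Ioc, mem_preimage, zsmul_eq_mul, Int.cast_add, Int.cast_one]
  constructor <;> rintro ⟨h1, h2⟩ <;> constructor <;> linarith

lemma lintegral_heatKernel1 {t : ℝ} (ht : 0 < t) (x : ℝ) :
    ∫⁻ y in Ioc 0 (2 * π), heatKernel1 t (x - y) = 1 := by
  unfold heatKernel1
  rw [lintegral_tsum fun n => by
    have := ProbabilityTheory.measurable_gaussianPDF 0 (2 * t).toNNReal
    fun_prop]
  have := tsum_setLIntegral_periods
    (h := fun y => ProbabilityTheory.gaussianPDF 0 (2 * t).toNNReal (x - y))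
  simp only [← sub_sub] at this
  rw [this, lintegral_sub_left_eq_self (fun y => ProbabilityTheory.gaussianPDF 0 (2 * t).toNNReal y),
    ProbabilityTheory.lintegral_gaussianPDF_eq_one]
  simpa using ht

/-- For `t ≥ 1` and `|y| ≤ 2π`, the inequality `(z - y)² ≤ 2z² + 2y²` gives
`exp (-z²/4t) ≤ exp (π²) exp (-(z - y)²/8t)`. Summed over the lattice this compares `heatKernel1 t x`
with `heatKernel1 (2t) (x - y)`, whose average over `y` in one period is `1/2π`. -/
lemma heatKernel1_le_of_one_le {t : ℝ} (ht : 1 ≤ t) (x : ℝ) :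
    heatKernel1 t x ≤ ENNReal.ofReal (√2 * rexp (π ^ 2) / (2 * π)) := by
  have ht0 : 0 < t := by linarith
  have key : ∀ y ∈ Ioc 0 (2 * π), heatKernel1 t x ≤
      ENNReal.ofReal (√2 * rexp (π ^ 2)) * heatKernel1 (2 * t) (x - y) := by
    intro y hy
    unfold heatKernel1
    rw [← ENNReal.tsum_mul_left]
    refine ENNReal.tsum_le_tsum fun n => ?_
    rw [gaussianPDF_two_mul ht0, gaussianPDF_two_mul (by positivity),
      ← ENNReal.ofReal_mul (by positivity)]
    apply ENNReal.ofReal_le_ofReal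
    set z := x - 2 * π * n with hz
    have hzy : x - y - 2 * π * n = z - y := by rw [hz]; ring
    rw [hzy]
    have h1 : √2 * (√(4 * π * (2 * t)))⁻¹ = (√(4 * π * t))⁻¹ := by
      rw [show 4 * π * (2 * t) = 2 * (4 * π * t) by ring, Real.sqrt_mul (by norm_num)]
      have : √2 ≠ 0 := by positivity
      field_simp
    have h2 : rexp (-z ^ 2 / (4 * t)) ≤ rexp (π ^ 2) * rexp (-(z - y) ^ 2 / (4 * (2 * t))) := by
      rw [← Real.exp_add]
      apply Real.exp_le_exp.2
      have hy2 : y ^ 2 ≤ (2 * π) ^ 2 := pow_le_pow_left₀ hy.1.le hy.2 2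
      have : π ^ 2 + -(z - y) ^ 2 / (4 * (2 * t)) - -z ^ 2 / (4 * t)
          = (8 * t * π ^ 2 - (z - y) ^ 2 + 2 * z ^ 2) / (8 * t) := by
        field_simp; ring
      have h3 : 0 ≤ (8 * t * π ^ 2 - (z - y) ^ 2 + 2 * z ^ 2) / (8 * t) := by
        apply div_nonneg _ (by positivity)
        nlinarith [sq_nonneg (z + y), mul_nonneg (sub_nonneg.2 ht) (sq_nonneg π)]
      linarith
    calc (√(4 * π * t))⁻¹ * rexp (-z ^ 2 / (4 * t))
        ≤ (√(4 * π * t))⁻¹ * (rexp (π ^ 2) * rexp (-(z - y) ^ 2 / (4 * (2 * t)))) := by gcongr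
      _ = _ := by rw [← h1]; ring
  have h4 : ENNReal.ofReal (2 * π) * heatKernel1 t x ≤ ENNReal.ofReal (√2 * rexp (π ^ 2)) := by
    calc ENNReal.ofReal (2 * π) * heatKernel1 t x
        = ∫⁻ y in Ioc 0 (2 * π), heatKernel1 t x := by
          rw [setLIntegral_const, Real.volume_Ioc, sub_zero, mul_comm]
      _ ≤ ∫⁻ y in Ioc 0 (2 * π),
            ENNReal.ofReal (√2 * rexp (π ^ 2)) * heatKernel1 (2 * t) (x - y) :=
          setLIntegral_mono' measurableSet_Ioc key
      _ = _ := by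
          rw [lintegral_const_mul' _ _ ENNReal.ofReal_ne_top, lintegral_heatKernel1 (by positivity),
            mul_one]
  rw [ENNReal.ofReal_div_of_pos (by positivity), ENNReal.le_div_iff_mul_le
    (Or.inl (by simpa using Real.pi_pos)) (Or.inl ENNReal.ofReal_ne_top), mul_comm]
  exact h4

/-- The sup bound on the kernel. For `t ≤ 1` it follows from the case `t = 1`, because
`exp (-z²/4t) ≤ exp (-z²/4)` and the normalizing factor scales like `t^{-1/2}`. -/
lemma heatKernel1_le {t : ℝ} (ht : 0 < t) (x : ℝ) :
    heatKernel1 t x ≤ ENNReal.ofReal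
      (√2 * rexp (π ^ 2) / (2 * π) * (1 + t ^ (-(1 : ℝ) / 2))) := by
  have hr : 0 < t ^ (-(1 : ℝ) / 2) := by positivity
  rcases le_total 1 t with h | h
  · refine (heatKernel1_le_of_one_le h x).trans (ENNReal.ofReal_le_ofReal ?_)
    exact le_mul_of_one_le_right (by positivity) (by linarith)
  · have : heatKernel1 t x ≤ ENNReal.ofReal (t ^ (-(1 : ℝ) / 2)) * heatKernel1 1 x := by
      unfold heatKernel1
      rw [← ENNReal.tsum_mul_left]
      refine ENNReal.tsum_le_tsum fun n => ?_
      rw [gaussianPDF_two_mul ht, gaussianPDF_two_mul one_pos,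
        ← ENNReal.ofReal_mul (by positivity)]
      apply ENNReal.ofReal_le_ofReal
      have h1 : (√(4 * π * t))⁻¹ = t ^ (-(1 : ℝ) / 2) * (√(4 * π * 1))⁻¹ := by
        rw [Real.sqrt_mul (by positivity), mul_inv, mul_one, mul_comm, neg_div,
          Real.rpow_neg ht.le, ← Real.sqrt_eq_rpow]
      rw [h1, ← mul_assoc]
      gcongr 2
      rw [neg_div, neg_div]
      apply neg_le_neg
      gcongr
    refine this.trans ?_
    refine (mul_le_mul_right (heatKernel1_le_of_one_le le_rfl x) _).trans ?_
    rw [← ENNReal.ofReal_mul hr.le]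
    apply ENNReal.ofReal_le_ofReal
    have : 0 < √2 * rexp (π ^ 2) / (2 * π) := by positivity
    nlinarith

/-- The three-dimensional kernel is dominated by the tensor product of one-dimensional ones. -/
lemma enorm_heatKernel3_le {t : ℝ} (ht : 0 < t) (x : ℝ × ℝ × ℝ) :
    ‖heatKernel3 t x‖ₑ ≤ heatKernel1 t x.1 * (heatKernel1 t x.2.1 * heatKernel1 t x.2.2) := by
  refine enorm_tsum_le_tsum_enorm.trans ?_
  unfold heatKernel1
  set G := ProbabilityTheory.gaussianPDF 0 (2 * t).toNNReal with hG
  have hc : (4 * π * t) ^ (-(3 : ℝ) / 2) =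
      (√(4 * π * t))⁻¹ * ((√(4 * π * t))⁻¹ * (√(4 * π * t))⁻¹) := by
    have h0 : 0 < 4 * π * t := by positivity
    rw [Real.sqrt_eq_rpow, ← Real.rpow_neg h0.le, ← Real.rpow_add h0, ← Real.rpow_add h0]
    norm_num
  have hterm : ∀ k : ℤ × ℤ × ℤ, ‖(4 * π * t) ^ (-(3 : ℝ) / 2) *
      Real.exp (-((x.1 - 2 * π * k.1) ^ 2 + (x.2.1 - 2 * π * k.2.1) ^ 2 +
        (x.2.2 - 2 * π * k.2.2) ^ 2) / (4 * t))‖ₑ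
      = G (x.1 - 2 * π * k.1) * (G (x.2.1 - 2 * π * k.2.1) * G (x.2.2 - 2 * π * k.2.2)) := by
    intro k
    rw [Real.enorm_of_nonneg (by positivity), hG, gaussianPDF_two_mul ht, gaussianPDF_two_mul ht,
      gaussianPDF_two_mul ht, ← ENNReal.ofReal_mul (by positivity),
      ← ENNReal.ofReal_mul (by positivity), hc]
    congr 1
    rw [neg_add, neg_add, add_div, add_div, Real.exp_add, Real.exp_add]
    ring
  rw [tsum_congr hterm, ENNReal.tsum_prod (f := fun (a : ℤ) (b : ℤ × ℤ) =>
    G (x.1 - 2 * π * a) * (G (x.2.1 - 2 * π * b.1) * G (x.2.2 - 2 * π * b.2)))]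
  simp only [ENNReal.tsum_mul_left]
  rw [ENNReal.tsum_prod (f := fun (a b : ℤ) => G (x.2.1 - 2 * π * a) * G (x.2.2 - 2 * π * b))]
  simp only [ENNReal.tsum_mul_left, ENNReal.tsum_mul_right, le_refl]

/-! ### Integration against the product kernel -/

lemma lintegral_box3 {g : ℝ × ℝ × ℝ → ℝ≥0∞} (hg : Measurable g) :
    ∫⁻ y in box3, g y = ∫⁻ a in Ioc 0 (2 * π), ∫⁻ b in Ioc 0 (2 * π),
      ∫⁻ c in Ioc 0 (2 * π), g (a, b, c) := by
  unfold box3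
  rw [Measure.volume_eq_prod, setLIntegral_prod _ hg.aemeasurable]
  refine lintegral_congr fun a => ?_
  rw [Measure.volume_eq_prod, setLIntegral_prod _ (by fun_prop)]

lemma lintegral_box3_mul {t : ℝ} (x₁ x₂ : ℝ) {g : ℝ × ℝ × ℝ → ℝ≥0∞}
    (hg : Measurable g) :
    ∫⁻ y in box3, heatKernel1 t (x₁ - y.1) * (heatKernel1 t (x₂ - y.2.1) * g y) =
      ∫⁻ a in Ioc 0 (2 * π), heatKernel1 t (x₁ - a) *
        ∫⁻ b in Ioc 0 (2 * π), heatKernel1 t (x₂ - b) *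
          ∫⁻ c in Ioc 0 (2 * π), g (a, b, c) := by
  have hk := measurable_heatKernel1 t
  rw [lintegral_box3 (by fun_prop)]
  refine lintegral_congr fun a => ?_
  rw [← lintegral_const_mul _ (by fun_prop)]
  refine lintegral_congr fun b => ?_
  rw [← lintegral_const_mul _ (by fun_prop), ← lintegral_const_mul _ (by fun_prop)]

/-- Averaging in the horizontal variables preserves a bound on vertical integrals that is uniform
in the horizontal variables. -/
lemma lintegral_box3_mul_le {t : ℝ} (ht : 0 < t) (x₁ x₂ : ℝ) {g : ℝ × ℝ × ℝ → ℝ≥0∞}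
    (hg : Measurable g) {B : ℝ≥0∞} (hB : ∀ a b, ∫⁻ c in Ioc 0 (2 * π), g (a, b, c) ≤ B) :
    ∫⁻ y in box3, heatKernel1 t (x₁ - y.1) * (heatKernel1 t (x₂ - y.2.1) * g y) ≤ B := by
  have hk := measurable_heatKernel1 t
  rw [lintegral_box3_mul x₁ x₂ hg]
  have h1 : ∀ a, ∫⁻ b in Ioc 0 (2 * π), heatKernel1 t (x₂ - b) *
      ∫⁻ c in Ioc 0 (2 * π), g (a, b, c) ≤ B := fun a =>
    calc _ ≤ ∫⁻ b in Ioc 0 (2 * π), heatKernel1 t (x₂ - b) * B :=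
          lintegral_mono fun b => by gcongr; exact hB a b
      _ = B := by rw [lintegral_mul_const _ (by fun_prop), lintegral_heatKernel1 ht, one_mul]
  calc _ ≤ ∫⁻ a in Ioc 0 (2 * π), heatKernel1 t (x₁ - a) * B :=
        lintegral_mono fun a => by gcongr; exact h1 a
    _ = B := by rw [lintegral_mul_const _ (by fun_prop), lintegral_heatKernel1 ht, one_mul]

/-- The convolution over `𝕋³` of a nonnegative function with the product of three one-dimensional
heat kernels, as a Lebesgue integral in `ℝ≥0∞`. -/
noncomputable def heatAverage (t : ℝ) (g : ℝ × ℝ × ℝ → ℝ≥0∞) (x : ℝ × ℝ × ℝ) : ℝ≥0∞ :=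
  ∫⁻ y in box3, heatKernel1 t (x.1 - y.1) *
    (heatKernel1 t (x.2.1 - y.2.1) * (heatKernel1 t (x.2.2 - y.2.2) * g y))

lemma enorm_heatSemigroup3_le {t : ℝ} (ht : 0 < t) (f : ℝ × ℝ × ℝ → ℂ) (x : ℝ × ℝ × ℝ) :
    ‖heatSemigroup3 t f x‖ₑ ≤ heatAverage t (fun y => ‖f y‖ₑ) x := by
  refine (enorm_integral_le_lintegral_enorm _).trans (lintegral_mono fun y => ?_)
  rw [enorm_mul, ← mul_assoc (heatKernel1 t (x.2.1 - y.2.1)), ← mul_assoc]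
  gcongr
  have h : ‖((heatKernel3 t (x - y) : ℝ) : ℂ)‖ₑ = ‖heatKernel3 t (x - y)‖ₑ := by
    rw [← ofReal_norm, ← ofReal_norm, Complex.norm_real]
  rw [h]
  exact enorm_heatKernel3_le ht (x - y)

/-- Jensen's inequality: the kernel is a probability density on the box. -/
lemma heatAverage_rpow_le {t : ℝ} (ht : 0 < t) {g : ℝ × ℝ × ℝ → ℝ≥0∞} (hg : Measurable g)
    {r : ℝ} (hr : 1 ≤ r) (x : ℝ × ℝ × ℝ) :
    heatAverage t g x ^ r ≤ heatAverage t (fun y => g y ^ r) x := by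
  have hk := measurable_heatKernel1 t
  set K : ℝ × ℝ × ℝ → ℝ≥0∞ := fun y => heatKernel1 t (x.1 - y.1) *
    (heatKernel1 t (x.2.1 - y.2.1) * heatKernel1 t (x.2.2 - y.2.2)) with hK
  have hKm : Measurable K := by fun_prop
  set ν := (volume.restrict box3).withDensity K with hν
  have hA : ∀ h : ℝ × ℝ × ℝ → ℝ≥0∞, Measurable h → heatAverage t h x = ∫⁻ y, h y ∂ν := by
    intro h hh
    rw [hν, lintegral_withDensity_eq_lintegral_mul _ hKm hh]
    refine lintegral_congr fun y => ?_
    simp only [hK, Pi.mul_apply, mul_assoc]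
  have : IsProbabilityMeasure ν := by
    refine ⟨?_⟩
    rw [hν, withDensity_apply _ MeasurableSet.univ, Measure.restrict_univ, hK,
      lintegral_box3_mul x.1 x.2.1 (g := fun y => heatKernel1 t (x.2.2 - y.2.2)) (by fun_prop)]
    simp only [lintegral_heatKernel1 ht, mul_one]
  have h := eLpNorm_le_eLpNorm_of_exponent_le (p := 1) (q := ENNReal.ofReal r)
    (by simpa using hr) (hg.aestronglyMeasurable (μ := ν))
  have hr0 : 0 < r := by linarith
  rw [eLpNorm_one_eq_lintegral_enorm, eLpNorm_eq_lintegral_rpow_enorm_toReal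
    (by simpa using hr0) ENNReal.ofReal_ne_top, ENNReal.toReal_ofReal hr0.le] at h
  simp only [enorm_eq_self] at h
  rw [hA _ hg, hA _ (by fun_prop)]
  rwa [one_div, ENNReal.le_rpow_inv_iff hr0] at h

/-- The `L^∞_H L^1 → L^∞` bound, from the sup bound on the vertical kernel. -/
lemma heatAverage_le {t : ℝ} (ht : 0 < t) {g : ℝ × ℝ × ℝ → ℝ≥0∞} (hg : Measurable g)
    {B : ℝ≥0∞} (hB : ∀ a b, ∫⁻ c in Ioc 0 (2 * π), g (a, b, c) ≤ B) (x : ℝ × ℝ × ℝ) :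
    heatAverage t g x ≤ ENNReal.ofReal
      (√2 * rexp (π ^ 2) / (2 * π) * (1 + t ^ (-(1 : ℝ) / 2))) * B := by
  have hk := measurable_heatKernel1 t
  refine lintegral_box3_mul_le ht x.1 x.2.1 (by fun_prop) fun a b => ?_
  refine (lintegral_mono fun c => mul_le_mul_left (heatKernel1_le ht _) _).trans ?_
  rw [lintegral_const_mul _ (by fun_prop)]
  gcongr
  exact hB a b

/-- The `L^∞_H L^1 → L^∞_H L^1` bound, by Tonelli and the unit mass of the vertical kernel. -/
lemma lintegral_heatAverage_le {t : ℝ} (ht : 0 < t) {g : ℝ × ℝ × ℝ → ℝ≥0∞} (hg : Measurable g)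
    {B : ℝ≥0∞} (hB : ∀ a b, ∫⁻ c in Ioc 0 (2 * π), g (a, b, c) ≤ B) (x₁ x₂ : ℝ) :
    ∫⁻ x₃ in Ioc 0 (2 * π), heatAverage t g (x₁, x₂, x₃) ≤ B := by
  have hk := measurable_heatKernel1 t
  unfold heatAverage
  rw [lintegral_lintegral_swap (by dsimp only [Function.uncurry]; fun_prop)]
  refine le_of_eq_of_le (lintegral_congr fun y => ?_) (lintegral_box3_mul_le ht x₁ x₂ hg hB)
  dsimp only
  rw [lintegral_const_mul _ (by fun_prop), lintegral_const_mul _ (by fun_prop),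
    lintegral_mul_const _ (by fun_prop)]
  have : ∫⁻ x₃ in Ioc 0 (2 * π), heatKernel1 t (x₃ - y.2.2) = 1 := by
    rw [← lintegral_heatKernel1 ht y.2.2]
    refine lintegral_congr fun z => ?_
    rw [← heatKernel1_neg ht, neg_sub]
  rw [this, one_mul]

/-- The `L^∞` bound, where the hypothesis holds on every vertical line up to a null set of that
line. -/
lemma heatAverage_le_of_ae {t : ℝ} (ht : 0 < t) {g : ℝ × ℝ × ℝ → ℝ≥0∞} (hg : Measurable g)
    {B : ℝ≥0∞} (hB : ∀ a b, ∀ᵐ c ∂volume.restrict (Ioc 0 (2 * π)), g (a, b, c) ≤ B)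
    (x : ℝ × ℝ × ℝ) : heatAverage t g x ≤ B := by
  have hk := measurable_heatKernel1 t
  refine lintegral_box3_mul_le ht x.1 x.2.1 (by fun_prop) fun a b => ?_
  calc _ ≤ ∫⁻ c in Ioc 0 (2 * π), heatKernel1 t (x.2.2 - c) * B :=
        lintegral_mono_ae ((hB a b).mono fun c hc => by dsimp only; gcongr)
    _ = B := by rw [lintegral_mul_const _ (by fun_prop), lintegral_heatKernel1 ht, one_mul]

/-! ### Interpolation and conclusion -/

lemma lintegral_rpow_le_anisoNorm {p : ℝ≥0∞} (hp : 1 ≤ p) (hp' : p ≠ ∞) (f : ℝ × ℝ × ℝ → ℂ)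
    (a b : ℝ) :
    ∫⁻ c in Ioc 0 (2 * π), ‖f (a, b, c)‖ₑ ^ p.toReal ≤ anisoNorm p f ^ p.toReal := by
  have hp0 : p ≠ 0 := (zero_lt_one.trans_le hp).ne'
  have h : eLpNorm (fun c => f (a, b, c)) p (volume.restrict (Ioc 0 (2 * π))) ≤ anisoNorm p f :=
    le_iSup₂_of_le a b le_rfl
  rwa [eLpNorm_eq_lintegral_rpow_enorm_toReal hp0 hp', one_div,
    ENNReal.rpow_inv_le_iff (ENNReal.toReal_pos hp0 hp')] at h

/-- Interpolation between `L^r` and `L^∞`, through `H^s = H^r H^{s-r}`. The majorant `A` of `H^r` and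
the finiteness of `M` and `N` make measurability of `H` unnecessary. -/
lemma lintegral_interpolation {α : Type*} [MeasurableSpace α] {μ : Measure α} {A H : α → ℝ≥0∞}
    {r s : ℝ} (hr : 0 < r) (hrs : r ≤ s) {M N : ℝ≥0∞} (hM : M ≠ ∞) (hN : N ≠ ∞)
    (hHA : ∀ z, H z ^ r ≤ A z) (hHM : ∀ z, H z ≤ M ^ (1 / r) * N) (hA : ∫⁻ z, A z ∂μ ≤ N ^ r) :
    (∫⁻ z, H z ^ s ∂μ) ^ (1 / s) ≤ M ^ (1 / r - 1 / s) * N := by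
  have hs : 0 < s := hr.trans_le hrs
  have hsr : 0 ≤ s - r := sub_nonneg.2 hrs
  have hne : M ^ (1 / r) * N ≠ ∞ :=
    ENNReal.mul_ne_top (ENNReal.rpow_ne_top_of_nonneg (by positivity) hM) hN
  rw [one_div s, ENNReal.rpow_inv_le_iff hs]
  calc ∫⁻ z, H z ^ s ∂μ ≤ ∫⁻ z, A z * (M ^ (1 / r) * N) ^ (s - r) ∂μ := by
        refine lintegral_mono fun z => ?_
        calc H z ^ s = H z ^ r * H z ^ (s - r) := by
              rw [← ENNReal.rpow_add_of_nonneg _ _ hr.le hsr, add_sub_cancel]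
          _ ≤ _ := mul_le_mul' (hHA z) (ENNReal.rpow_le_rpow (hHM z) hsr)
    _ = (∫⁻ z, A z ∂μ) * (M ^ (1 / r) * N) ^ (s - r) :=
        lintegral_mul_const' _ _ (ENNReal.rpow_ne_top_of_nonneg hsr hne)
    _ ≤ N ^ r * (M ^ (1 / r) * N) ^ (s - r) := by gcongr
    _ = (M ^ (1 / r - s⁻¹) * N) ^ s := by
        rw [ENNReal.mul_rpow_of_nonneg _ _ hsr, ENNReal.mul_rpow_of_nonneg _ _ hs.le,
          ← ENNReal.rpow_mul, ← ENNReal.rpow_mul, mul_left_comm,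
          ← ENNReal.rpow_add_of_nonneg _ _ hr.le hsr, add_sub_cancel]
        congr 2
        field_simp

theorem heatSemigroup_anisoNorm_bound (p q : ℝ≥0∞) (hp : 1 ≤ p) (hpq : p ≤ q) :
    ∃ C : ℝ, 0 < C ∧ ∀ t : ℝ, 0 < t → ∀ f : ℝ × ℝ × ℝ → ℂ,
      Measurable f → Periodic3 f →
      anisoNorm q (heatSemigroup3 t f)
        ≤ ENNReal.ofReal
            (C * (1 + t ^ (-(1 : ℝ) / 2)) ^ (1 / p.toReal - 1 / q.toReal)) *
          anisoNorm p f := by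
  have hC : 0 < √2 * rexp (π ^ 2) / (2 * π) := by positivity
  set C₀ := √2 * rexp (π ^ 2) / (2 * π) with hC₀
  refine ⟨C₀ ^ (1 / p.toReal - 1 / q.toReal), by positivity, fun t ht f hf _ => ?_⟩
  have hT : 0 < 1 + t ^ (-(1 : ℝ) / 2) := by positivity
  rw [← Real.mul_rpow hC.le hT.le, ← ENNReal.ofReal_rpow_of_pos (by positivity)]
  set M := ENNReal.ofReal (C₀ * (1 + t ^ (-(1 : ℝ) / 2))) with hM
  have hM0 : M ≠ 0 := by rw [hM]; simp only [ne_eq, ENNReal.ofReal_eq_zero, not_le]; positivity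
  have hMtop : M ≠ ∞ := ENNReal.ofReal_ne_top
  set N := anisoNorm p f with hN
  -- When `N = ∞` the right-hand side is `∞`, since the prefactor is nonzero.
  by_cases hNtop : N = ∞
  · rw [hNtop, ENNReal.mul_top]
    · exact le_top
    · exact (ENNReal.rpow_pos (pos_iff_ne_zero.2 hM0) hMtop).ne'
  refine iSup₂_le fun x₁ x₂ => ?_
  have hF := enorm_heatSemigroup3_le ht f
  by_cases hp' : p = ∞
  · obtain rfl : q = ∞ := top_le_iff.1 (hp' ▸ hpq)
    subst hp'
    rw [sub_self, ENNReal.rpow_zero, one_mul, eLpNorm_exponent_top]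
    refine eLpNormEssSup_le_of_ae_enorm_bound (.of_forall fun x₃ => (hF _).trans ?_)
    refine heatAverage_le_of_ae ht hf.enorm (fun a b => ?_) _
    have h : eLpNorm (fun c => f (a, b, c)) ∞ (volume.restrict (Ioc 0 (2 * π))) ≤ N :=
      le_iSup₂_of_le a b le_rfl
    rw [eLpNorm_exponent_top] at h
    filter_upwards [ae_le_eLpNormEssSup (f := fun c => f (a, b, c))] with c hc
    exact hc.trans h
  have hp0 : p ≠ 0 := (zero_lt_one.trans_le hp).ne'
  have hr : 0 < p.toReal := ENNReal.toReal_pos hp0 hp'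
  have hr1 : 1 ≤ p.toReal := by simpa using ENNReal.toReal_mono hp' hp
  have hfp : Measurable fun y => ‖f y‖ₑ ^ p.toReal := hf.enorm.pow_const _
  have hB := lintegral_rpow_le_anisoNorm hp hp' f
  have hHA : ∀ x, ‖heatSemigroup3 t f x‖ₑ ^ p.toReal ≤
      heatAverage t (fun y => ‖f y‖ₑ ^ p.toReal) x := fun x =>
    (ENNReal.rpow_le_rpow (hF x) hr.le).trans (heatAverage_rpow_le ht hf.enorm hr1 x)
  have hHM : ∀ x, ‖heatSemigroup3 t f x‖ₑ ≤ M ^ (1 / p.toReal) * N := fun x => by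
    have h := (hHA x).trans (heatAverage_le ht hfp hB x)
    rw [← ENNReal.le_rpow_inv_iff hr, ENNReal.mul_rpow_of_nonneg _ _ (inv_nonneg.2 hr.le),
      ENNReal.rpow_rpow_inv hr.ne', ← one_div] at h
    exact h
  by_cases hq' : q = ∞
  · subst hq'
    rw [ENNReal.toReal_top, div_zero, sub_zero, eLpNorm_exponent_top]
    exact eLpNormEssSup_le_of_ae_enorm_bound (.of_forall fun x₃ => hHM _)
  rw [eLpNorm_eq_lintegral_rpow_enorm_toReal (zero_lt_one.trans_le (hp.trans hpq)).ne' hq']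
  exact lintegral_interpolation hr (ENNReal.toReal_mono hq' hpq) hMtop hNtop
    (fun x₃ => hHA (x₁, x₂, x₃)) (fun x₃ => hHM (x₁, x₂, x₃))
    (lintegral_heatAverage_le ht hfp hB x₁ x₂)
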